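/- Let k, ℓ, b, n be integers with k ≥ 1, 1 ≤ ℓ ≤ k, b ∈ {0,1}, and n ≥ b. Then, as an identity of Laurent polynomials in q (equivalently, for every q ∈ ℂ with q ≠ 0, where each Gaussian polynomial is evaluated as a polynomial in its argument), H_n(k,ℓ;b;q^{−1}) = q^{(k−1)bn − (k−1)n(n+1)} · G_{k−1,ℓ,k,2n−b+1}(q). -/

import Mathlib

noncomputable section
open Classical

/-- The Gaussian binomial coefficient `[n choose r]_q` as a polynomial in `q` with integer
coefficients, defined by the q-Pascal recursion
`[n+1 choose r+1] = [n choose r+1] + q^{n-r} [n choose r]`, `[n choose 0] = 1`,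
`[0 choose r+1] = 0`. -/
def qbinom : ℕ → ℕ → Polynomial ℤ
  | _, 0 => 1
  | 0, _ + 1 => 0
  | n + 1, r + 1 => qbinom n (r + 1) + Polynomial.X ^ (n - r) * qbinom n r

/-- The Gaussian polynomial `[m choose r]_q` with integer arguments, evaluated at `q ∈ ℂ`:
it is `[m choose r]_q` if `0 ≤ r ≤ m`, and `0` otherwise. -/
def gaussP (q : ℂ) (m r : ℤ) : ℂ :=
  if 0 ≤ r ∧ r ≤ m then ((qbinom m.toNat r.toNat).map (Int.castRingHom ℂ)).eval q else 0

/-- Accessor for a chain `0 = n_0 ≤ n_1 ≤ ⋯ ≤ n_{k-1} ≤ n_k = n` encoded by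
`f : Fin (k-1) → Fin (n+1)` (the values `n_1, …, n_{k-1}`). -/
def chainN (k n : ℕ) (f : Fin (k - 1) → Fin (n + 1)) (j : ℕ) : ℕ :=
  if h : 1 ≤ j ∧ j ≤ k - 1 then (f ⟨j - 1, by omega⟩ : ℕ)
  else if j = 0 then 0 else n

/-- The polynomial `H_n(k,ℓ;b;q)`: the sum over chains `n = n_k ≥ n_{k-1} ≥ ⋯ ≥ n_1 ≥ 0` of
`∏_{j=1}^{k-1} q^{n_j² + (1-b) n_j} [n_{j+1} - n_j - bj + Σ_{r=1}^j (2 n_r + χ_{ℓ>r}) choose n_{j+1} - n_j]_q`. -/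
def HpolyP (k ℓ b : ℕ) (q : ℂ) (n : ℕ) : ℂ :=
  ∑ f ∈ Finset.univ.filter
      (fun f : Fin (k - 1) → Fin (n + 1) => ∀ i j, i ≤ j → f i ≤ f j),
    ∏ j ∈ Finset.Icc 1 (k - 1),
      q ^ (chainN k n f j ^ 2 + (1 - b) * chainN k n f j) *
        gaussP q
          ((chainN k n f (j + 1) : ℤ) - (chainN k n f j : ℤ) - (b : ℤ) * (j : ℤ)
            + ∑ r ∈ Finset.Icc 1 j, (2 * (chainN k n f r : ℤ) + if r < ℓ then 1 else 0))
          ((chainN k n f (j + 1) : ℤ) - (chainN k n f j : ℤ))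

/-- Accessor for a frequency tuple `(f_1, …, f_{L-1})` encoded by `g : Fin (L-1) → Fin B`
(value `0` outside the index range `1 ≤ j ≤ L-1`). -/
def fval (L B : ℕ) (g : Fin (L - 1) → Fin B) (j : ℕ) : ℕ :=
  if h : 1 ≤ j ∧ j ≤ L - 1 then (g ⟨j - 1, by omega⟩ : ℕ) else 0

/-- The generating function `G_{k,i,i',L}(q)` for partitions `Σ_{j=1}^{L-1} j·f_j` with
frequencies satisfying `f_1 ≤ i-1`, `f_{L-1} ≤ i'-1`, and `f_j + f_{j+1} ≤ k` for
`1 ≤ j ≤ L-2`. (All such frequencies are bounded by `k + i + i'`.) -/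
def Gpoly (k i i' L : ℕ) (q : ℂ) : ℂ :=
  ∑ g ∈ Finset.univ.filter
      (fun g : Fin (L - 1) → Fin (k + i + i') =>
        fval L (k + i + i') g 1 ≤ i - 1 ∧ fval L (k + i + i') g (L - 1) ≤ i' - 1 ∧
          ∀ j ∈ Finset.Icc 1 (L - 2),
            fval L (k + i + i') g j + fval L (k + i + i') g (j + 1) ≤ k),
    q ^ (∑ j ∈ Finset.Icc 1 (L - 1), j * fval L (k + i + i') g j)

/-!
Both sides are refined by an integer `P`: on the partition side it is the number of parts `∑ f_j`,
on the chain side it is `∑ (n - n_j)`. For every `P` the two refined sums agree, up to the stated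
power of `q`, because both are equal to the same multiple sum, `fermionicSum`.

On the chain side, once `P` is fixed, the last Gaussian polynomial depends only on `n` and
`n_{k-1}`. Splitting off `n_{k-1}` and passing to the reciprocal polynomial is therefore exactly the
recursion that defines `fermionicSum`. On the partition side, removing the first frequency gives a
recurrence which determines the refined sum. That `fermionicSum` satisfies it is proved by induction
on the level: the recurrence at level `K`, applied twice inside the sum at level `K + 1`, leaves a
defect that telescopes by the `q`-Pascal rule.
-/

section GaussianPolynomials

lemma qbinom_eq_zero_of_lt : ∀ {n r : ℕ}, n < r → qbinom n r = 0
  | _, 0, h => absurd h (Nat.not_lt_zero _)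
  | 0, _ + 1, _ => by rw [qbinom]
  | n + 1, r + 1, h => by
    rw [qbinom, qbinom_eq_zero_of_lt (show n < r + 1 by omega),
      qbinom_eq_zero_of_lt (show n < r by omega), mul_zero, add_zero]

lemma gaussP_natCast (q : ℂ) (m r : ℕ) :
    gaussP q m r = ((qbinom m r).map (Int.castRingHom ℂ)).eval q := by
  by_cases h : r ≤ m
  · simp [gaussP, h]
  · simp [gaussP, h, qbinom_eq_zero_of_lt (not_le.mp h)]

lemma gaussP_succ_succ (q : ℂ) (m r : ℕ) :
    gaussP q (m + 1 : ℕ) (r + 1 : ℕ) = gaussP q m (r + 1 : ℕ) + q ^ (m - r) * gaussP q m r := by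
  simp only [gaussP_natCast, qbinom, Polynomial.map_add, Polynomial.map_mul, Polynomial.map_pow,
    Polynomial.map_X, Polynomial.eval_add, Polynomial.eval_mul, Polynomial.eval_pow,
    Polynomial.eval_X]

lemma gaussP_zero_right (q : ℂ) {m : ℤ} (hm : 0 ≤ m) : gaussP q m 0 = 1 := by
  simp [gaussP, hm, qbinom]

/-- The Gaussian polynomial `[n + m choose n]_q`, expressed through its reciprocal as
`q^{nm} [n + m choose n]_{q⁻¹}`. In this form the recursion defining `qbinom` turns into the
`q`-Pascal rule that carries the power of `q` on the other summand. -/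
def gaussInv (q : ℂ) (m n : ℤ) : ℂ :=
  q ^ (n * m) * gaussP q⁻¹ (n + m) n

lemma gaussInv_eq_zero_of_left_neg (q : ℂ) {m : ℤ} (hm : m < 0) (n : ℤ) :
    gaussInv q m n = 0 := by
  rw [gaussInv, gaussP, if_neg (by omega), mul_zero]

lemma gaussInv_eq_zero_of_right_neg (q : ℂ) (m : ℤ) {n : ℤ} (hn : n < 0) :
    gaussInv q m n = 0 := by
  rw [gaussInv, gaussP, if_neg (by omega), mul_zero]

lemma gaussInv_zero_right (q : ℂ) {m : ℤ} (hm : 0 ≤ m) : gaussInv q m 0 = 1 := by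
  rw [gaussInv, zero_mul, zpow_zero, one_mul, zero_add, gaussP_zero_right _ hm]

lemma gaussInv_natCast_succ (q : ℂ) (hq : q ≠ 0) (m n : ℕ) :
    gaussInv q m (n + 1) = q ^ ((n : ℤ) + 1) * gaussInv q (m - 1) (n + 1) + gaussInv q m n := by
  have pascal := gaussP_succ_succ q⁻¹ (n + m) n
  rw [Nat.add_sub_cancel_left] at pascal
  push_cast at pascal
  simp only [gaussInv, show (n : ℤ) + 1 + m = n + m + 1 by ring,
    show (n : ℤ) + 1 + (m - 1) = n + m by ring, pascal]
  have hshift : q ^ (((n : ℤ) + 1) * m) = q ^ ((n : ℤ) + 1) * q ^ (((n : ℤ) + 1) * (m - 1)) := by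
    rw [← zpow_add₀ hq]; ring_nf
  have hcancel : q ^ (((n : ℤ) + 1) * m) * q⁻¹ ^ m = q ^ ((n : ℤ) * m) := by
    rw [inv_pow, ← zpow_natCast, ← zpow_neg, ← zpow_add₀ hq]; ring_nf
  rw [mul_add, ← mul_assoc, ← mul_assoc, hcancel, hshift]

lemma gaussInv_pascal (q : ℂ) (hq : q ≠ 0) {m n : ℤ} (h : ¬(m = 0 ∧ n = 0)) :
    gaussInv q m n = q ^ n * gaussInv q (m - 1) n + gaussInv q m (n - 1) := by
  rcases lt_or_ge m 0 with hm | hm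
  · simp only [gaussInv_eq_zero_of_left_neg q hm,
      gaussInv_eq_zero_of_left_neg q (show m - 1 < 0 by omega), mul_zero, add_zero]
  rcases lt_trichotomy n 0 with hn | rfl | hn
  · simp only [gaussInv_eq_zero_of_right_neg q _ hn,
      gaussInv_eq_zero_of_right_neg q _ (show n - 1 < 0 by omega), mul_zero, add_zero]
  · rw [gaussInv_zero_right q hm, gaussInv_zero_right q (by omega),
      gaussInv_eq_zero_of_right_neg q _ (by norm_num), zpow_zero, mul_one, add_zero]
  · obtain ⟨m, rfl⟩ := Int.eq_ofNat_of_zero_le hm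
    obtain ⟨n, rfl⟩ : ∃ i : ℕ, n = i + 1 := ⟨(n - 1).toNat, by omega⟩
    rw [add_sub_cancel_right]
    exact gaussInv_natCast_succ q hq m n

end GaussianPolynomials

section FermionicSum

/-- The exponent of `q` in the `n`-th summand of `fermionicSum` at level `k`. -/
def fermionicExponent (k l P : ℤ) (n : ℕ) : ℤ :=
  2 * n * P - k * n ^ 2 + (k + 1 - l) * n

/-- The `n`-th summand of `fermionicSum` at level `K + 1`, in terms of the sum `F` at level `K`. -/
def fermionicSummand (q : ℂ) (K : ℕ) (F : ℤ → ℤ → ℤ → ℂ) (l M P : ℤ) (n : ℕ) : ℂ :=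
  q ^ fermionicExponent (K + 1) l P n * F (min l (K + 1)) (M - 2 * n) (P - (K + 1) * n) *
    gaussInv q ((K + 1) * M - 2 * P + l - 1) n

/-- The fermionic form of the generating function `∑ q^{∑ j f_j}` over the frequency tuples
`(f_1, …, f_M)` with `f_1 ≤ l - 1`, `f_j + f_{j+1} ≤ K` and exactly `P` parts, `P = ∑ f_j`
(see `partitionSum_eq_fermionicSum`), by recursion on `K`. The range of summation is `2n ≤ M + 1`.
The value `M = -1` has no meaning for partitions, but it occurs in `chainSum_eq_fermionicSum`
when `b = 1` and `n = 0`. -/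
def fermionicSum (q : ℂ) : ℕ → ℤ → ℤ → ℤ → ℂ
  | 0, l, M, P => if P = 0 ∧ -1 ≤ M ∧ 1 ≤ l then 1 else 0
  | K + 1, l, M, P => ∑ n ∈ Finset.range ((M + 3) / 2).toNat,
      fermionicSummand q K (fermionicSum q K) l M P n

variable (q : ℂ)

lemma fermionicSum_eq_zero_of_lt_neg_one :
    ∀ (K : ℕ) (l : ℤ) {M : ℤ} (P : ℤ), M < -1 → fermionicSum q K l M P = 0
  | 0, l, M, P, h => by rw [fermionicSum, if_neg (by omega)]
  | K + 1, l, M, P, h => by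
    rw [fermionicSum, show ((M + 3) / 2).toNat = 0 by omega, Finset.sum_range_zero]

lemma fermionicSum_succ_eq_sum_range (K : ℕ) (l P : ℤ) {M : ℤ} {N : ℕ} (hN : M + 1 < 2 * N) :
    fermionicSum q (K + 1) l M P =
      ∑ n ∈ Finset.range N, fermionicSummand q K (fermionicSum q K) l M P n := by
  rw [fermionicSum]
  refine Finset.sum_subset (Finset.range_mono (by omega)) fun n _ hn ↦ ?_
  rw [Finset.mem_range] at hn
  rw [fermionicSummand, fermionicSum_eq_zero_of_lt_neg_one q K _ _ (by omega), mul_zero, zero_mul]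

lemma fermionicSum_zero_left : ∀ (K : ℕ) (M P : ℤ), fermionicSum q K 0 M P = 0
  | 0, M, P => by rw [fermionicSum, if_neg (by omega)]
  | K + 1, M, P => by
    rw [fermionicSum]
    refine Finset.sum_eq_zero fun n _ ↦ ?_
    rw [fermionicSummand, min_eq_left (by positivity), fermionicSum_zero_left K, mul_zero, zero_mul]

lemma fermionicSum_eq_zero_of_lt_two_mul :
    ∀ (K : ℕ) {l M P : ℤ}, K * M + l - 1 < 2 * P → fermionicSum q K l M P = 0
  | 0, l, M, P, h => by
    rw [Nat.cast_zero, zero_mul] at h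
    rw [fermionicSum, if_neg (by omega)]
  | K + 1, l, M, P, h => by
    push_cast at h
    rw [fermionicSum]
    refine Finset.sum_eq_zero fun n _ ↦ ?_
    rw [fermionicSummand, gaussInv_eq_zero_of_left_neg q (by omega), mul_zero]

lemma fermionicSum_eq_zero_of_nonpos :
    ∀ (K : ℕ) (l : ℤ) {M P : ℤ}, M ≤ 0 → P ≠ 0 → fermionicSum q K l M P = 0
  | 0, l, M, P, _, hP => by rw [fermionicSum, if_neg (by omega)]
  | K + 1, l, M, P, hM, hP => by
    rw [fermionicSum_succ_eq_sum_range q K l P (N := 1) (by push_cast; omega),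
      Finset.sum_range_one, fermionicSummand, Nat.cast_zero, mul_zero, mul_zero, sub_zero, sub_zero,
      fermionicSum_eq_zero_of_nonpos K _ hM hP, mul_zero, zero_mul]

lemma fermionicSum_zero_zero : ∀ (K : ℕ) {l : ℤ}, 1 ≤ l → fermionicSum q K l 0 0 = 1
  | 0, l, hl => by rw [fermionicSum, if_pos (by omega)]
  | K + 1, l, hl => by
    rw [fermionicSum_succ_eq_sum_range q K l 0 (N := 1) (by norm_num), Finset.sum_range_one,
      fermionicSummand, Nat.cast_zero, gaussInv_zero_right q (by omega)]
    simp [fermionicExponent, fermionicSum_zero_zero K (show 1 ≤ min l (K + 1) by omega)]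

/-- The recurrence of the partition generating function in the bound `l` on the first frequency,
as a property of `fermionicSum` at level `K`: either `f_1 < l - 1`, or `f_1 = l - 1` is removed and
the other frequencies are shifted down by one position. -/
def FirstFrequencyRecurrence (q : ℂ) (K : ℕ) : Prop :=
  ∀ l M P : ℤ, 1 ≤ l → l ≤ K + 1 → ¬(M = -1 ∧ P = 0) →
    fermionicSum q K l M P = fermionicSum q K (l - 1) M P +
      q ^ P * fermionicSum q K (K + 2 - l) (M - 1) (P - l + 1)

variable {q}

lemma FirstFrequencyRecurrence.min_succ {K : ℕ} (h : FirstFrequencyRecurrence q K) {l M P : ℤ}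
    (hl : 1 ≤ l) (hlK : l ≤ K + 2) (hm : 0 ≤ (K + 1) * M - 2 * P + l - 1) :
    fermionicSum q K (min l (K + 1)) M P = fermionicSum q K (l - 1) M P +
      q ^ P * fermionicSum q K (K + 2 - l) (M - 1) (P - l + 1) := by
  rcases hlK.eq_or_lt with rfl | hlK
  · rw [min_eq_right (by omega), sub_self, fermionicSum_zero_left, mul_zero, add_zero]
    ring_nf
  · rw [min_eq_left (by omega)]
    refine h l M P hl (by omega) ?_
    rintro ⟨rfl, rfl⟩
    omega

lemma zpow_fermionicExponent_sub_one (hq : q ≠ 0) (k l P : ℤ) (n : ℕ) :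
    q ^ fermionicExponent k (l - 1) P n = q ^ fermionicExponent k l P n * q ^ (n : ℤ) := by
  rw [← zpow_add₀ hq]
  simp only [fermionicExponent]
  ring_nf

lemma zpow_mul_zpow_fermionicExponent_reflect (hq : q ≠ 0) (k l P : ℤ) (n : ℕ) :
    q ^ P * q ^ fermionicExponent k (k + 2 - l) (P - l + 1) n =
      q ^ fermionicExponent k l P n * q ^ (P - k * n) := by
  rw [← zpow_add₀ hq, ← zpow_add₀ hq]
  simp only [fermionicExponent]
  ring_nf

lemma zpow_fermionicExponent_succ (hq : q ≠ 0) (k l P : ℤ) (n : ℕ) :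
    q ^ fermionicExponent k l P (n + 1) =
      q ^ fermionicExponent k l P n * q ^ (P - k * n) * q ^ (P - l + 1 - k * n) := by
  rw [← zpow_add₀ hq, ← zpow_add₀ hq]
  simp only [fermionicExponent]
  push_cast
  ring_nf

lemma fermionicSum_mul_gaussInv_pascal (hq : q ≠ 0) (K : ℕ) {l M P : ℤ}
    (hMP : ¬(M = -1 ∧ P = 0)) (n : ℕ) :
    fermionicSum q K (l - 1) (M - 2 * n) (P - (K + 1) * n) *
        gaussInv q ((K + 1) * M - 2 * P + l - 1) n =
      fermionicSum q K (l - 1) (M - 2 * n) (P - (K + 1) * n) *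
        (q ^ (n : ℤ) * gaussInv q ((K + 1) * M - 2 * P + l - 1 - 1) n +
          gaussInv q ((K + 1) * M - 2 * P + l - 1) (n - 1)) := by
  -- The `q`-Pascal rule fails at `[0 choose 0]`, but there the other factor vanishes.
  by_cases hexc : (K + 1) * M - 2 * P + l - 1 = 0 ∧ (n : ℤ) = 0
  · obtain ⟨hm, hn⟩ := hexc
    suffices hF : fermionicSum q K (l - 1) M P = 0 by
      rw [hn, mul_zero, mul_zero, sub_zero, sub_zero, hF, zero_mul, zero_mul]
    rcases lt_trichotomy M (-1) with hM | rfl | hM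
    · exact fermionicSum_eq_zero_of_lt_neg_one q K _ P hM
    · exact fermionicSum_eq_zero_of_nonpos q K _ (by norm_num) fun hP ↦ hMP ⟨rfl, hP⟩
    · exact fermionicSum_eq_zero_of_lt_two_mul q K (by linarith)
  · rw [← gaussInv_pascal q hq hexc]

/-- The potential whose differences account for the defect of the recurrence, summand by summand. -/
def fermionicPotential (q : ℂ) (K : ℕ) (l M P : ℤ) (n : ℕ) : ℂ :=
  q ^ fermionicExponent (K + 1) l P n *
    fermionicSum q K (l - 1) (M - 2 * n) (P - (K + 1) * n) *
    gaussInv q ((K + 1) * M - 2 * P + l - 1) (n - 1)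

lemma fermionicSummand_recurrence (hq : q ≠ 0) {K : ℕ} (h : FirstFrequencyRecurrence q K)
    {l M P : ℤ} (hl : 1 ≤ l) (hlK : l ≤ K + 2) (hMP : ¬(M = -1 ∧ P = 0)) (n : ℕ) :
    fermionicSummand q K (fermionicSum q K) l M P n -
        fermionicSummand q K (fermionicSum q K) (l - 1) M P n -
        q ^ P * fermionicSummand q K (fermionicSum q K) (K + 3 - l) (M - 1) (P - l + 1) n =
      fermionicPotential q K l M P n - fermionicPotential q K l M P (n + 1) := by
  have hm₁ : ((K : ℤ) + 1) * M - 2 * P + (l - 1) - 1 = (K + 1) * M - 2 * P + l - 1 - 1 := by ring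
  have hm₂ : ((K : ℤ) + 1) * (M - 1) - 2 * (P - l + 1) + (K + 3 - l) - 1 =
      (K + 1) * M - 2 * P + l - 1 := by ring
  have hpred : ((n + 1 : ℕ) : ℤ) - 1 = n := by push_cast; ring
  have pascal := fermionicSum_mul_gaussInv_pascal hq K (l := l) hMP n
  have hreflect := zpow_mul_zpow_fermionicExponent_reflect hq (K + 1) l P n
  rw [show (K : ℤ) + 1 + 2 - l = K + 3 - l by ring] at hreflect
  simp only [fermionicSummand, fermionicPotential, hm₁, hm₂, hpred,
    min_eq_left (show l - 1 ≤ (K : ℤ) + 1 by omega), zpow_fermionicExponent_sub_one hq,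
    zpow_fermionicExponent_succ hq]
  rcases lt_or_ge ((K + 1) * M - 2 * P + l - 1) 0 with hneg | hnonneg
  · simp only [gaussInv_eq_zero_of_left_neg q hneg,
      gaussInv_eq_zero_of_left_neg q (show (K + 1) * M - 2 * P + l - 1 - 1 < 0 by omega),
      mul_zero, sub_zero]
  have hfirst := h.min_succ (M := M - 2 * n) (P := P - (K + 1) * n) hl hlK (by linarith)
  have hsecond := h.min_succ (l := K + 3 - l) (M := M - 1 - 2 * n)
    (P := P - l + 1 - (K + 1) * n) (by omega) (by omega) (by linarith)
  rw [show (K : ℤ) + 3 - l - 1 = K + 2 - l by ring,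
    show (K : ℤ) + 2 - (K + 3 - l) = l - 1 by ring,
    show M - 1 - 2 * n - 1 = M - 2 * (n + 1 : ℕ) by push_cast; ring,
    show P - l + 1 - ((K : ℤ) + 1) * n - (K + 3 - l) + 1 = P - (K + 1) * (n + 1 : ℕ) by
      push_cast; ring] at hsecond
  rw [show M - 2 * n - 1 = M - 1 - 2 * n by ring,
    show P - ((K : ℤ) + 1) * n - l + 1 = P - l + 1 - (K + 1) * n by ring] at hfirst
  rw [hfirst, hsecond]
  linear_combination q ^ fermionicExponent (K + 1) l P n * pascal -
    (fermionicSum q K (K + 2 - l) (M - 1 - 2 * n) (P - l + 1 - (K + 1) * n) +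
      q ^ (P - l + 1 - (K + 1) * n) *
        fermionicSum q K (l - 1) (M - 2 * (n + 1 : ℕ)) (P - (K + 1) * (n + 1 : ℕ))) *
      gaussInv q ((K + 1) * M - 2 * P + l - 1) n * hreflect

lemma FirstFrequencyRecurrence.succ (hq : q ≠ 0) {K : ℕ} (h : FirstFrequencyRecurrence q K) :
    FirstFrequencyRecurrence q (K + 1) := by
  intro l M P hl hlK hMP
  push_cast at hlK ⊢
  obtain ⟨N, hN⟩ : ∃ N : ℕ, M + 1 < 2 * N := ⟨(M + 2).toNat, by omega⟩
  rw [show (K : ℤ) + 1 + 2 - l = K + 3 - l by ring, fermionicSum_succ_eq_sum_range q K l P hN,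
    fermionicSum_succ_eq_sum_range q K (l - 1) P hN,
    fermionicSum_succ_eq_sum_range q K _ _ (show M - 1 + 1 < 2 * N by omega)]
  have hfirst : fermionicPotential q K l M P 0 = 0 := by
    rw [fermionicPotential, gaussInv_eq_zero_of_right_neg q _ (by norm_num), mul_zero]
  have hlast : fermionicPotential q K l M P N = 0 := by
    rw [fermionicPotential, fermionicSum_eq_zero_of_lt_neg_one q K _ _ (by omega), mul_zero,
      zero_mul]
  have htelescope := Finset.sum_range_sub' (fermionicPotential q K l M P) N
  simp only [← fermionicSummand_recurrence hq h hl (by omega) hMP, Finset.sum_sub_distrib,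
    ← Finset.mul_sum, hfirst, hlast] at htelescope
  linear_combination htelescope

lemma firstFrequencyRecurrence (hq : q ≠ 0) : ∀ K : ℕ, FirstFrequencyRecurrence q K
  | 0, l, M, P, hl, hl1, hMP => by
    obtain rfl : l = 1 := by push_cast at hl1; omega
    simp only [fermionicSum]
    by_cases hP : P = 0
    · have hM : -1 ≤ M ↔ -1 < M := by omega
      simp [hP, hM]
    · simp [hP]
  | K + 1, l, M, P, hl, hlK, hMP => (firstFrequencyRecurrence hq K).succ hq l M P hl hlK hMP

lemma fermionicSum_eq_sum_range (hq : q ≠ 0) (K : ℕ) {M P : ℤ} (hMP : ¬(M = -1 ∧ P = 0)) :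
    ∀ {l : ℕ}, l ≤ K + 1 → fermionicSum q K l M P =
      ∑ a ∈ Finset.range l, q ^ P * fermionicSum q K (K + 1 - a) (M - 1) (P - a)
  | 0, _ => by rw [Nat.cast_zero, fermionicSum_zero_left, Finset.sum_range_zero]
  | l + 1, h => by
    rw [firstFrequencyRecurrence hq K _ M P (by omega) (by omega) hMP, Finset.sum_range_succ,
      ← fermionicSum_eq_sum_range hq K hMP (show l ≤ K + 1 by omega)]
    push_cast
    ring_nf

end FermionicSum

section TupleSums

variable {A : Type*} [AddCommMonoid A]

lemma sum_fin_cons {α : Type*} [Fintype α] {M : ℕ} (F : (Fin (M + 1) → α) → A) :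
    ∑ g, F g = ∑ a, ∑ g : Fin M → α, F (Fin.cons a g : Fin (M + 1) → α) := by
  rw [← (Fin.consEquiv fun _ ↦ α).sum_comp, Fintype.sum_prod_type]
  rfl

lemma sum_fin_snoc {α : Type*} [Fintype α] {M : ℕ} (F : (Fin (M + 1) → α) → A) :
    ∑ g, F g = ∑ a, ∑ g : Fin M → α, F (Fin.snoc g a : Fin (M + 1) → α) := by
  rw [← (Fin.snocEquiv fun _ ↦ α).sum_comp, Fintype.sum_prod_type]
  rfl

lemma sum_fin_ite_lt_eq_sum_range {l B : ℕ} (h : l ≤ B) (F : ℕ → A) :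
    ∑ a : Fin B, (if (a : ℕ) < l then F a else 0) = ∑ a ∈ Finset.range l, F a := by
  rw [Fin.sum_univ_eq_sum_range (fun a ↦ if a < l then F a else 0) B, ← Finset.sum_filter]
  refine Finset.sum_congr ?_ fun _ _ ↦ rfl
  ext a
  simp only [Finset.mem_filter, Finset.mem_range]
  omega

lemma finsum_sum_filter_eq_sum {ι κ : Type*} [DecidableEq κ] (s : Finset ι) (g : ι → κ)
    (f : ι → A) :
    ∑ᶠ y, ∑ x ∈ s with g x = y, f x = ∑ x ∈ s, f x := by
  rw [finsum_eq_sum_of_support_subset (s := s.image g),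
    Finset.sum_fiberwise_of_maps_to fun _ ↦ Finset.mem_image_of_mem g]
  refine fun y hy ↦ ?_
  obtain ⟨x, hx, -⟩ := Finset.exists_ne_zero_of_sum_ne_zero hy
  obtain ⟨hxs, rfl⟩ := Finset.mem_filter.mp hx
  exact Finset.mem_image_of_mem g hxs

lemma sum_Icc_one_eq_sum_fin (M : ℕ) (h : ℕ → A) :
    ∑ j ∈ Finset.Icc 1 M, h j = ∑ j : Fin M, h (j + 1) := by
  rw [Fin.sum_univ_eq_sum_range fun j ↦ h (j + 1), Finset.range_eq_Ico,
    Finset.sum_Ico_add' h 0 M 1]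
  rfl

end TupleSums

lemma monotone_snoc {α : Type*} [Preorder α] {K : ℕ} {f : Fin K → α} {a : α} :
    Monotone (Fin.snoc f a : Fin (K + 1) → α) ↔ Monotone f ∧ ∀ i, f i ≤ a := by
  refine ⟨fun h ↦ ⟨fun i j hij ↦ ?_, fun i ↦ ?_⟩, fun ⟨hf, ha⟩ i j hij ↦ ?_⟩
  · simpa using h (Fin.castSucc_le_castSucc_iff.mpr hij)
  · simpa using h (Fin.le_last i.castSucc)
  · induction j using Fin.lastCases with
    | last =>
      induction i using Fin.lastCases with
      | last => rfl
      | cast i => simpa using ha i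
    | cast j =>
      induction i using Fin.lastCases with
      | last => exact absurd hij (Fin.castSucc_lt_last j).not_ge
      | cast i => simpa using hf (Fin.castSucc_le_castSucc_iff.mp hij)

section Partitions

variable {K l M B : ℕ}

lemma fval_succ_fin (g : Fin M → Fin B) (j : Fin M) : fval (M + 1) B g (j + 1) = g j := by
  rw [fval, dif_pos (by omega)]
  rfl

lemma fval_eq_zero_of_le (g : Fin M → Fin B) {j : ℕ} (h : M ≤ j) :
    fval (M + 1) B g (j + 1) = 0 := by
  rw [fval, dif_neg (by omega)]

lemma fval_cons_one (a : Fin B) (g : Fin M → Fin B) :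
    fval (M + 2) B (Fin.cons a g : Fin (M + 1) → Fin B) 1 = a :=
  fval_succ_fin (M := M + 1) _ 0

lemma fval_cons_succ (a : Fin B) (g : Fin M → Fin B) (j : ℕ) :
    fval (M + 2) B (Fin.cons a g : Fin (M + 1) → Fin B) (j + 2) = fval (M + 1) B g (j + 1) := by
  rcases lt_or_ge j M with h | h
  · exact (fval_succ_fin (M := M + 1) _ (Fin.succ ⟨j, h⟩)).trans (fval_succ_fin g ⟨j, h⟩).symm
  · rw [fval_eq_zero_of_le g h]
    exact fval_eq_zero_of_le (M := M + 1) _ (Nat.succ_le_succ h)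

/-- The frequency conditions `f_1 < l` and `f_j + f_{j+1} ≤ K` on a tuple `(f_1, …, f_M)`.
Since `fval` vanishes outside `1, …, M`, the second one includes `f_M ≤ K`. -/
def IsAdmissible (K l : ℕ) (g : Fin M → Fin B) : Prop :=
  fval (M + 1) B g 1 < l ∧ ∀ j, fval (M + 1) B g (j + 1) + fval (M + 1) B g (j + 2) ≤ K

lemma isAdmissible_iff (hl : 1 ≤ l) (g : Fin M → Fin B) :
    IsAdmissible K l g ↔ fval (M + 1) B g 1 ≤ l - 1 ∧ fval (M + 1) B g M ≤ K ∧
      ∀ j ∈ Finset.Icc 1 (M - 1), fval (M + 1) B g j + fval (M + 1) B g (j + 1) ≤ K := by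
  refine and_congr (by omega) ⟨fun hadj ↦ ⟨?_, fun j hj ↦ ?_⟩, fun ⟨hlast, hadj⟩ j ↦ ?_⟩
  · rcases M with - | M
    · exact (dif_neg (by omega)).trans_le K.zero_le
    · exact (Nat.le_add_right _ _).trans (hadj M)
  · obtain ⟨j, rfl⟩ := Nat.exists_eq_add_of_le' (Finset.mem_Icc.mp hj).1
    exact hadj j
  · rcases lt_or_ge (j + 1) M with hj | hj
    · exact hadj (j + 1) (Finset.mem_Icc.mpr (by omega))
    · rw [fval_eq_zero_of_le g hj]
      rcases hj.eq_or_lt with rfl | hj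
      · exact hlast
      · rw [fval_eq_zero_of_le g (Nat.le_of_lt_succ hj)]
        exact K.zero_le

lemma isAdmissible_cons (hlK : l ≤ K + 1) (a : Fin B) (g : Fin M → Fin B) :
    IsAdmissible K l (Fin.cons a g : Fin (M + 1) → Fin B) ↔
      (a : ℕ) < l ∧ IsAdmissible K (K + 1 - a) g := by
  have hhead : (a : ℕ) < l → ((a : ℕ) + fval (M + 1) B g 1 ≤ K ↔
      fval (M + 1) B g 1 < K + 1 - a) := by omega
  simp only [IsAdmissible, ← Nat.and_forall_add_one (p := fun j ↦ fval (M + 2) B _ (j + 1) + _ ≤ K),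
    fval_cons_one, fval_cons_succ]
  exact and_congr_right fun ha ↦ and_congr_left fun _ ↦ hhead ha

/-- The sum of `q^{∑ j f_j}` over the tuples `(f_1, …, f_M)` with entries below `B` that satisfy
`f_1 < l`, `f_j + f_{j+1} ≤ K` and `∑ f_j = P`. -/
def partitionSum (q : ℂ) (K B l M : ℕ) (P : ℤ) : ℂ :=
  ∑ g : Fin M → Fin B with IsAdmissible K l g ∧ ∑ j, (g j : ℤ) = P,
    q ^ ∑ j : Fin M, (j + 1) * (g j : ℕ)

lemma partitionSum_zero (q : ℂ) (K B : ℕ) (hl : 1 ≤ l) (P : ℤ) :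
    partitionSum q K B l 0 P = if P = 0 then 1 else 0 := by
  have hadm (g : Fin 0 → Fin B) : IsAdmissible K l g :=
    ⟨(fval_eq_zero_of_le g le_rfl).trans_lt hl, fun j ↦ by
      rw [fval_eq_zero_of_le g j.zero_le, fval_eq_zero_of_le g (j + 1).zero_le]
      exact K.zero_le⟩
  rw [partitionSum, Finset.sum_filter, Fintype.sum_unique]
  simp [hadm, eq_comm]

lemma partitionSum_succ (q : ℂ) (hlK : l ≤ K + 1) (hB : K < B) (P : ℤ) :
    partitionSum q K B l (M + 1) P =
      ∑ a ∈ Finset.range l, q ^ P * partitionSum q K B (K + 1 - a) M (P - a) := by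
  rw [← sum_fin_ite_lt_eq_sum_range (show l ≤ B by omega), partitionSum, Finset.sum_filter,
    sum_fin_cons]
  refine Finset.sum_congr rfl fun a _ ↦ ?_
  rw [partitionSum, Finset.sum_filter, Finset.mul_sum, Finset.ite_sum_zero]
  refine Finset.sum_congr rfl fun g _ ↦ ?_
  rw [mul_ite, mul_zero, ← ite_and]
  have hcond : (IsAdmissible K l (Fin.cons a g : Fin (M + 1) → Fin B) ∧
      ∑ j, ((Fin.cons a g : Fin (M + 1) → Fin B) j : ℤ) = P) ↔
      (a : ℕ) < l ∧ IsAdmissible K (K + 1 - a) g ∧ ∑ j, (g j : ℤ) = P - a := by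
    simp only [isAdmissible_cons hlK, Fin.sum_univ_succ, Fin.cons_zero, Fin.cons_succ, and_assoc,
      eq_sub_iff_add_eq']
  simp only [hcond]
  refine ite_congr rfl (fun h ↦ ?_) fun _ ↦ rfl
  have hP : P = (a + ∑ j, (g j : ℕ) : ℕ) := by push_cast; linarith [h.2.2]
  simp only [hP, zpow_natCast, ← pow_add, Fin.sum_univ_succ, Fin.cons_zero, Fin.cons_succ,
    Fin.val_zero, Fin.val_succ, add_mul, Finset.sum_add_distrib]
  ring_nf

lemma partitionSum_eq_fermionicSum {q : ℂ} (hq : q ≠ 0) (hB : K < B) :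
    ∀ {M l : ℕ}, 1 ≤ l → l ≤ K + 1 → ∀ P : ℤ,
      partitionSum q K B l M P = fermionicSum q K l M P
  | 0, l, hl, _, P => by
    rw [partitionSum_zero q K B hl, Nat.cast_zero]
    split_ifs with hP
    · rw [hP, fermionicSum_zero_zero q K (by omega)]
    · rw [fermionicSum_eq_zero_of_nonpos q K l le_rfl hP]
  | M + 1, l, _, hlK, P => by
    rw [partitionSum_succ q hlK hB, fermionicSum_eq_sum_range hq K (by omega) hlK]
    refine Finset.sum_congr rfl fun a ha ↦ ?_
    rw [Finset.mem_range] at ha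
    rw [partitionSum_eq_fermionicSum hq hB (by omega) (by omega), Nat.cast_sub (by omega)]
    push_cast
    rw [add_sub_cancel_right]

lemma Gpoly_eq_finsum_partitionSum (q : ℂ) (hl : 1 ≤ l) (M : ℕ) :
    Gpoly K l (K + 1) (M + 1) q = ∑ᶠ P : ℤ, partitionSum q K (K + l + (K + 1)) l M P := by
  simp only [partitionSum, ← Finset.filter_filter]
  rw [finsum_sum_filter_eq_sum, Gpoly]
  refine Finset.sum_congr ?_ fun g _ ↦ ?_
  · ext g
    simp only [Finset.mem_filter, isAdmissible_iff hl, Nat.add_sub_cancel,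
      show M + 1 - 2 = M - 1 by rfl]
  · rw [Nat.add_sub_cancel, sum_Icc_one_eq_sum_fin]
    simp only [fval_succ_fin]

end Partitions

section Chains

variable {ℓ b K n B : ℕ}

/-- The entries of the chain `0 = n_0 ≤ n_1 ≤ ⋯ ≤ n_K ≤ n_{K+1} = n` encoded by `f`, as in `chainN`
but with an arbitrary bound `B` in place of `n + 1`. -/
def chain (n : ℕ) (f : Fin K → Fin B) (j : ℕ) : ℕ :=
  if h : 1 ≤ j ∧ j ≤ K then f ⟨j - 1, by omega⟩ else if j = 0 then 0 else n

lemma chain_succ_fin (n : ℕ) (f : Fin K → Fin B) (j : Fin K) : chain n f (j + 1) = f j := by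
  rw [chain, dif_pos (by omega)]
  rfl

lemma chain_last (n : ℕ) (f : Fin K → Fin B) : chain n f (K + 1) = n := by
  rw [chain, dif_neg (by omega), if_neg (by omega)]

lemma chain_snoc (n : ℕ) (f : Fin K → Fin B) (a : Fin B) {j : ℕ} (hj : j ≤ K + 1) :
    chain n (Fin.snoc f a : Fin (K + 1) → Fin B) j = chain (a : ℕ) f j := by
  rcases j with - | j
  · rfl
  rcases (Nat.le_of_succ_le_succ hj).eq_or_lt with rfl | hj
  · rw [chain_last]
    exact (chain_succ_fin n _ (Fin.last j)).trans (by rw [Fin.snoc_last])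
  · exact (chain_succ_fin n _ (Fin.castSucc ⟨j, hj⟩)).trans
      (by rw [Fin.snoc_castSucc, ← chain_succ_fin a])

/-- `f` encodes a chain `n_1 ≤ ⋯ ≤ n_K ≤ n`. -/
def IsChainBelow (n : ℕ) (f : Fin K → Fin B) : Prop :=
  Monotone f ∧ ∀ i, (f i : ℕ) ≤ n

lemma isChainBelow_snoc {f : Fin K → Fin B} {a : Fin B} :
    IsChainBelow n (Fin.snoc f a : Fin (K + 1) → Fin B) ↔
      (a : ℕ) ≤ n ∧ IsChainBelow (a : ℕ) f := by
  simp only [IsChainBelow, monotone_snoc, Fin.forall_fin_succ', Fin.snoc_castSucc, Fin.snoc_last]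
  exact ⟨fun ⟨⟨hf, hfa⟩, _, han⟩ ↦ ⟨han, hf, hfa⟩,
    fun ⟨han, hf, hfa⟩ ↦ ⟨⟨hf, hfa⟩, fun i ↦ (hfa i).trans han, han⟩⟩

lemma sum_sub_snoc (n : ℕ) (f : Fin K → Fin B) (a : Fin B) :
    ∑ i, ((n : ℤ) - (Fin.snoc f a : Fin (K + 1) → Fin B) i) =
      (K + 1) * (n - (a : ℕ)) + ∑ i, (((a : ℕ) : ℤ) - f i) := by
  simp only [Fin.sum_univ_castSucc, Fin.snoc_castSucc, Fin.snoc_last, Finset.sum_sub_distrib,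
    Finset.sum_const, Finset.card_univ, Fintype.card_fin, nsmul_eq_mul, Nat.cast_succ]
  ring

lemma sum_Icc_ite_lt (hℓ : 1 ≤ ℓ) (j : ℕ) :
    ∑ r ∈ Finset.Icc 1 j, (if r < ℓ then (1 : ℤ) else 0) = min (ℓ : ℤ) (j + 1) - 1 := by
  induction j with
  | zero => rw [Finset.Icc_eq_empty (by omega), Finset.sum_empty]; omega
  | succ j ih =>
    rw [Finset.sum_Icc_succ_top (by omega), ih]
    split_ifs <;> omega

/-- The `j`-th factor in the summand of `HpolyP` belonging to the chain `c`. -/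
def chainFactor (q : ℂ) (ℓ b : ℕ) (c : ℕ → ℕ) (j : ℕ) : ℂ :=
  q ^ (c j ^ 2 + (1 - b) * c j) *
    gaussP q ((c (j + 1) : ℤ) - c j - b * j +
        ∑ r ∈ Finset.Icc 1 j, (2 * (c r : ℤ) + if r < ℓ then 1 else 0))
      ((c (j + 1) : ℤ) - c j)

lemma chainFactor_congr (q : ℂ) (ℓ b : ℕ) {c d : ℕ → ℕ} {j : ℕ} (h : ∀ i ≤ j + 1, c i = d i) :
    chainFactor q ℓ b c j = chainFactor q ℓ b d j := by
  have hsum : ∑ r ∈ Finset.Icc 1 j, (2 * (c r : ℤ) + if r < ℓ then 1 else 0) =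
      ∑ r ∈ Finset.Icc 1 j, (2 * (d r : ℤ) + if r < ℓ then 1 else 0) :=
    Finset.sum_congr rfl fun r hr ↦ by
      rw [h r ((Finset.mem_Icc.mp hr).2.trans j.le_succ)]
  rw [chainFactor, chainFactor, hsum, h j j.le_succ, h (j + 1) le_rfl]

/-- The part of `HpolyP (K + 1) ℓ b q⁻¹ n` coming from the chains with `∑ (n - n_j) = P`. The
entries are bounded by `B` so that chains with different last terms `n` live in the same type. -/
def chainSum (q : ℂ) (ℓ b B K n : ℕ) (P : ℤ) : ℂ :=
  ∑ f : Fin K → Fin B with IsChainBelow n f ∧ ∑ i, ((n : ℤ) - f i) = P,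
    ∏ j ∈ Finset.Icc 1 K, chainFactor q⁻¹ ℓ b (chain n f) j

lemma HpolyP_eq_finsum_chainSum (q : ℂ) (ℓ b K n : ℕ) :
    HpolyP (K + 1) ℓ b q⁻¹ n = ∑ᶠ P : ℤ, chainSum q ℓ b (n + 1) K n P := by
  simp only [chainSum, ← Finset.filter_filter]
  rw [finsum_sum_filter_eq_sum]
  refine Finset.sum_congr ?_ fun f _ ↦ rfl
  ext f
  simp only [Finset.mem_filter, Finset.mem_univ, true_and]
  exact (and_iff_left fun i ↦ (f i).is_le).symm

lemma chainSum_zero (q : ℂ) (ℓ b B n : ℕ) (P : ℤ) :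
    chainSum q ℓ b B 0 n P = if P = 0 then 1 else 0 := by
  rw [chainSum, Finset.sum_filter, Fintype.sum_unique]
  simp [IsChainBelow, Subsingleton.monotone, eq_comm]

lemma chainFactor_snoc_last (q : ℂ) (hℓ : 1 ≤ ℓ) (f : Fin K → Fin B) (a : Fin B) :
    chainFactor q ℓ b (chain n (Fin.snoc f a : Fin (K + 1) → Fin B)) (K + 1) =
      q ^ ((a : ℕ) ^ 2 + (1 - b) * (a : ℕ)) *
        gaussP q (n - a - b * (K + 1) + 2 * (∑ i, (f i : ℤ) + a) + min (ℓ : ℤ) (K + 2) - 1)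
          (n - a) := by
  have hsum : ∑ r ∈ Finset.Icc 1 (K + 1),
      (2 * (chain n (Fin.snoc f a : Fin (K + 1) → Fin B) r : ℤ) + if r < ℓ then 1 else 0) =
        2 * (∑ i, (f i : ℤ) + a) + (min (ℓ : ℤ) (K + 2) - 1) := by
    rw [Finset.sum_add_distrib, sum_Icc_ite_lt hℓ, ← Finset.mul_sum, sum_Icc_one_eq_sum_fin]
    simp only [chain_succ_fin, Fin.sum_univ_castSucc, Fin.snoc_castSucc, Fin.snoc_last]
    push_cast
    ring_nf
  rw [chainFactor, chain_last, chain_snoc n f a le_rfl, chain_last, hsum]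
  push_cast
  ring_nf

lemma chainSum_succ (q : ℂ) (hℓ : 1 ≤ ℓ) (hn : n < B) (P : ℤ) :
    chainSum q ℓ b B (K + 1) n P = ∑ a ∈ Finset.range (n + 1),
      q⁻¹ ^ (a ^ 2 + (1 - b) * a) *
        gaussP q⁻¹ ((n - a) + ((K + 1) * (2 * n - b) - 2 * P + min (ℓ : ℤ) (K + 2) - 1)) (n - a) *
        chainSum q ℓ b B K a (P - (K + 1) * (n - a)) := by
  rw [← sum_fin_ite_lt_eq_sum_range (show n + 1 ≤ B by omega), chainSum, Finset.sum_filter,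
    sum_fin_snoc]
  refine Finset.sum_congr rfl fun a _ ↦ ?_
  rw [chainSum, Finset.sum_filter, Finset.mul_sum, Finset.ite_sum_zero]
  refine Finset.sum_congr rfl fun f _ ↦ ?_
  rw [mul_ite, mul_zero, ← ite_and]
  refine ite_congr ?_ (fun h ↦ ?_) fun _ ↦ rfl
  · rw [isChainBelow_snoc, sum_sub_snoc, ← eq_sub_iff_add_eq', Nat.lt_succ_iff, and_assoc]
  · have hsum : ∑ i, (f i : ℤ) + a = (K + 1) * n - P := by
      have hP := h.2.2
      simp only [Finset.sum_sub_distrib, Finset.sum_const, Finset.card_univ, Fintype.card_fin,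
        nsmul_eq_mul] at hP
      linear_combination -hP
    rw [Finset.prod_Icc_succ_top (by omega), chainFactor_snoc_last _ hℓ, hsum, mul_comm]
    congr 1
    · ring_nf
    · refine Finset.prod_congr rfl fun j hj ↦ chainFactor_congr _ _ _ fun i hi ↦ ?_
      rw [Finset.mem_Icc] at hj
      exact chain_snoc n f a (by omega)

lemma zpow_chain_exponent {q : ℂ} (hq : q ≠ 0) (hb : b ≤ 1) (K u v : ℕ) (l P : ℤ) :
    q⁻¹ ^ (u ^ 2 + (1 - b) * u) * q ^ (-(K * (u ^ 2 + (1 - b) * u)) : ℤ) =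
      q ^ (-((K + 1) * ((u + v) ^ 2 + (1 - b) * (u + v))) : ℤ) *
        q ^ fermionicExponent (K + 1) l P v *
        q ^ (v * ((K + 1) * (2 * (u + v) - b) - 2 * P + l - 1) : ℤ) := by
  rw [inv_pow, ← zpow_natCast, ← zpow_neg, ← zpow_add₀ hq, ← zpow_add₀ hq, ← zpow_add₀ hq,
    fermionicExponent]
  push_cast [Nat.cast_sub hb]
  ring_nf

lemma chainSum_eq_fermionicSum {q : ℂ} (hq : q ≠ 0) (hℓ : 1 ≤ ℓ) (hb : b ≤ 1) :
    ∀ {K n : ℕ}, n < B → ∀ P : ℤ, chainSum q ℓ b B K n P =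
      q ^ (-(K * (n ^ 2 + (1 - b) * n)) : ℤ) *
        fermionicSum q K (min (ℓ : ℤ) (K + 1)) (2 * n - b) P
  | 0, n, _, P => by
    have hM : -1 ≤ 2 * (n : ℤ) - b := by omega
    rw [chainSum_zero, fermionicSum]
    simp [hM, hℓ]
  | K + 1, n, hn, P => by
    rw [chainSum_succ q hℓ hn, fermionicSum_succ_eq_sum_range q K _ P (N := n + 1) (by omega),
      ← Finset.sum_flip, Finset.mul_sum]
    refine Finset.sum_congr rfl fun v hv ↦ ?_
    obtain ⟨u, rfl⟩ := Nat.exists_eq_add_of_le' (Nat.le_of_lt_succ (Finset.mem_range.mp hv))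
    rw [Nat.add_sub_cancel, chainSum_eq_fermionicSum hq hℓ hb (by omega)]
    have hmin : min (min (ℓ : ℤ) (K + 2)) (K + 1) = min (ℓ : ℤ) (K + 1) := by omega
    have hl : (((K + 1 : ℕ) : ℤ) + 1) = K + 2 := by push_cast; ring
    have hM : 2 * ((u + v : ℕ) : ℤ) - b - 2 * v = 2 * u - b := by push_cast; ring
    have hv : ((u + v : ℕ) : ℤ) - u = v := by push_cast; ring
    rw [fermionicSummand, gaussInv, hl, hmin, hM, hv]
    push_cast
    linear_combination
      gaussP q⁻¹ (v + ((K + 1) * (2 * (u + v) - b) - 2 * P + min (ℓ : ℤ) (K + 2) - 1)) v *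
        fermionicSum q K (min (ℓ : ℤ) (K + 1)) (2 * u - b) (P - (K + 1) * v) *
        zpow_chain_exponent hq hb K u v (min (ℓ : ℤ) (K + 2)) P

end Chains

/-- Equation (1.3): `H_n(k,ℓ;b;q⁻¹) = q^{(k-1)bn - (k-1)n(n+1)} G_{k-1,ℓ,k,2n-b+1}(q)`,
as an identity for every nonzero complex `q`. -/
theorem statement10 (k ℓ b n : ℕ) (hk : 1 ≤ k) (hℓ : 1 ≤ ℓ) (hℓk : ℓ ≤ k)
    (hb : b = 0 ∨ b = 1) (hn : b ≤ n) (q : ℂ) (hq : q ≠ 0) :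
    HpolyP k ℓ b q⁻¹ n
      = q ^ (((k : ℤ) - 1) * (b : ℤ) * (n : ℤ) - ((k : ℤ) - 1) * (n : ℤ) * ((n : ℤ) + 1)) *
        Gpoly (k - 1) ℓ k (2 * n - b + 1) q := by
  obtain ⟨K, rfl⟩ := Nat.exists_eq_add_of_le' hk
  have hchain := chainSum_eq_fermionicSum hq hℓ (show b ≤ 1 by omega) (K := K) n.lt_succ_self
  have hpart (P : ℤ) : partitionSum q K (K + ℓ + (K + 1)) ℓ (2 * n - b) P =
      fermionicSum q K ℓ (2 * n - b) P := by
    rw [partitionSum_eq_fermionicSum hq (by omega) hℓ hℓk, Nat.cast_sub (by omega)]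
    push_cast
    rfl
  rw [HpolyP_eq_finsum_chainSum, Nat.add_sub_cancel, Gpoly_eq_finsum_partitionSum q hℓ, mul_finsum]
  refine finsum_congr fun P ↦ ?_
  rw [hchain, hpart, min_eq_left (by exact_mod_cast hℓk)]
  push_cast
  ring_nf
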